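/- Let c_{n,m}(u) be the number of words w of length n with entries at most m such that uw is Knuth-equivalent to wu. If u is a single positive integer, then c_{n,m}(u) = c_{n,m}(1) when u ≤ m, and c_{n,m}(u) = 1 if n = 0 and 0 otherwise when u > m. -/

import Mathlib

namespace Plactic

/-- Insert `x` into a weakly increasing row, returning the new row and the bumped entry. -/
def rowInsert (x : ℕ) : List ℕ → List ℕ × Option ℕ
  | [] => ([x], none)
  | y :: ys =>
    if x < y then (x :: ys, some y)
    else
      let p := rowInsert x ys
      (y :: p.1, p.2)

/-- RSK insertion of `x` into a tableau given as a list of rows. -/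
def tInsert (x : ℕ) : List (List ℕ) → List (List ℕ)
  | [] => [[x]]
  | r :: rs =>
    match rowInsert x r with
    | (r', none) => r' :: rs
    | (r', some y) => r' :: tInsert y rs

/-- The RSK insertion tableau of a word. -/
def P (w : List ℕ) : List (List ℕ) := w.foldl (fun t x => tInsert x t) []

/-- The `i`-th row (0-indexed) of the insertion tableau of `w`. -/
def row (w : List ℕ) (i : ℕ) : List ℕ := (P w).getD i []

/-- The `j`-th column (0-indexed) of a tableau, read top to bottom. -/
def col (T : List (List ℕ)) (j : ℕ) : List ℕ := T.filterMap (fun r => r[j]?)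

/-- An elementary Knuth transposition. -/
inductive KStep : List ℕ → List ℕ → Prop
  | k1 (x y : List ℕ) (a b c : ℕ) : a ≤ b → b < c →
      KStep (x ++ [a, c, b] ++ y) (x ++ [c, a, b] ++ y)
  | k2 (x y : List ℕ) (a b c : ℕ) : a < b → b ≤ c →
      KStep (x ++ [b, a, c] ++ y) (x ++ [b, c, a] ++ y)

/-- Knuth equivalence: the equivalence relation generated by Knuth transpositions. -/
def KEquiv : List ℕ → List ℕ → Prop := Relation.EqvGen KStep

/-- The centralizer of `u` in the plactic monoid. -/
def Cent (u : List ℕ) : Set (List ℕ) := {w | KEquiv (u ++ w) (w ++ u)}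

end Plactic

namespace Plactic

/-- The number of words of length `n` with positive entries at most `m`
lying in the centralizer of `u`. -/
noncomputable def c (n m : ℕ) (u : List ℕ) : ℕ :=
  {w : List ℕ | w ∈ Cent u ∧ w.length = n ∧ ∀ x ∈ w, 1 ≤ x ∧ x ≤ m}.ncard

end Plactic

/-!
Let `ℓ w` be the length of a longest weakly increasing subsequence of `w`, which is invariant under
Knuth equivalence, and let `k` be the number of occurrences of `u` in `w`. Then `w` commutes with
`u` if and only if `ℓ w ≤ k`.

If `w` commutes with `u`, then `uᴺ w w uᴺ ≡ w u²ᴺ w`. For large `N` a longest increasing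
subsequence has length at most `2 N + 2 k` on the left, and at least `ℓ w + k + 2 N` on the right.
Conversely, column insertion writes `w` as a product of at most `ℓ w` columns. If `ℓ w ≤ k`, then
each of them contains `u`, and a column containing `u` commutes with `u`.

With this criterion, changing the unmatched letters `i` of a word into `i + 1` injects the
centralizer of `i` into that of `i + 1`: it does not increase `ℓ`, and it leaves as many letters
`i + 1` as there were letters `i`. Reversing a word and complementing its entries in `[1, m]`
returns from the centralizer of `m` to that of `1`, so all the injections between the finite sets
being counted are bijections. If `u > m`, then `k = 0` and `w` is empty.
-/

namespace Plactic

/-! ### Knuth equivalence as a congruence -/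

namespace KEquiv

variable {u v w v' w' : List ℕ}

@[refl]
theorem refl (w : List ℕ) : KEquiv w w := Relation.EqvGen.refl w

theorem symm (h : KEquiv v w) : KEquiv w v := Relation.EqvGen.symm _ _ h

theorem trans (h : KEquiv u v) (h' : KEquiv v w) : KEquiv u w := Relation.EqvGen.trans _ _ _ h h'

instance : Trans KEquiv KEquiv KEquiv := ⟨trans⟩

theorem append_left (h : KEquiv v w) (p : List ℕ) : KEquiv (p ++ v) (p ++ w) := by
  induction h with
  | rel _ _ h =>
    refine Relation.EqvGen.rel _ _ ?_
    cases h with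
    | k1 x y a b c hab hbc => simpa using KStep.k1 (p ++ x) y a b c hab hbc
    | k2 x y a b c hab hbc => simpa using KStep.k2 (p ++ x) y a b c hab hbc
  | refl _ => rfl
  | symm _ _ _ ih => exact ih.symm
  | trans _ _ _ _ _ ih ih' => exact ih.trans ih'

theorem append_right (h : KEquiv v w) (q : List ℕ) : KEquiv (v ++ q) (w ++ q) := by
  induction h with
  | rel _ _ h =>
    refine Relation.EqvGen.rel _ _ ?_
    cases h with
    | k1 x y a b c hab hbc => simpa using KStep.k1 x (y ++ q) a b c hab hbc
    | k2 x y a b c hab hbc => simpa using KStep.k2 x (y ++ q) a b c hab hbc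
  | refl _ => rfl
  | symm _ _ _ ih => exact ih.symm
  | trans _ _ _ _ _ ih ih' => exact ih.trans ih'

theorem append (h : KEquiv v w) (h' : KEquiv v' w') : KEquiv (v ++ v') (w ++ w') :=
  (h.append_right v').trans (h'.append_left w)

theorem perm (h : KEquiv v w) : v.Perm w := by
  induction h with
  | rel _ _ h =>
    cases h with
    | k1 x y a b c _ _ => exact ((List.Perm.swap c a [b]).append_left x).append_right y
    | k2 x y a b c _ _ => exact (((List.Perm.swap c a []).cons b).append_left x).append_right y
  | refl _ => exact List.Perm.refl _
  | symm _ _ _ ih => exact ih.symm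
  | trans _ _ _ _ _ ih ih' => exact ih.trans ih'

theorem cons_swap_of_le_of_lt {a b c : ℕ} (hab : a ≤ b) (hbc : b < c) (w : List ℕ) :
    KEquiv (a :: c :: b :: w) (c :: a :: b :: w) :=
  Relation.EqvGen.rel _ _ (KStep.k1 [] w a b c hab hbc)

theorem cons_swap_of_lt_of_le {a b c : ℕ} (hab : a < b) (hbc : b ≤ c) (w : List ℕ) :
    KEquiv (b :: a :: c :: w) (b :: c :: a :: w) :=
  Relation.EqvGen.rel _ _ (KStep.k2 [] w a b c hab hbc)

end KEquiv

theorem mem_cent_comm {u w : List ℕ} : w ∈ Cent u ↔ u ∈ Cent w := ⟨KEquiv.symm, KEquiv.symm⟩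

theorem append_mem_cent {u v w : List ℕ} (hv : v ∈ Cent u) (hw : w ∈ Cent u) :
    v ++ w ∈ Cent u := by
  have hv' : KEquiv (u ++ (v ++ w)) (v ++ (u ++ w)) := by
    simpa only [List.append_assoc] using KEquiv.append_right hv w
  have hw' : KEquiv (v ++ (u ++ w)) (v ++ w ++ u) := by
    simpa only [List.append_assoc] using KEquiv.append_left hw v
  exact hv'.trans hw'

theorem flatten_mem_cent {u : List ℕ} {ws : List (List ℕ)} (h : ∀ w ∈ ws, w ∈ Cent u) :
    ws.flatten ∈ Cent u := by
  induction ws with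
  | nil => simp [Cent, KEquiv.refl]
  | cons w ws ih =>
    rw [List.forall_mem_cons] at h
    exact append_mem_cent h.1 (ih h.2)

theorem mem_cent_of_kEquiv {u v w : List ℕ} (h : KEquiv v w) (hv : v ∈ Cent u) : w ∈ Cent u :=
  (h.symm.append_left u).trans (KEquiv.trans hv (h.append_right u))

theorem mem_cent_replicate {u : ℕ} {w : List ℕ} (h : w ∈ Cent [u]) (n : ℕ) :
    w ∈ Cent (List.replicate n u) := by
  rw [mem_cent_comm, ← List.flatten_replicate_singleton]
  exact flatten_mem_cent fun v hv => List.eq_of_mem_replicate hv ▸ mem_cent_comm.1 h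

/-! ### Longest weakly increasing subsequences -/

/-- The length of a longest weakly increasing subsequence of a word all of whose entries are at
least the first argument. -/
def lisFrom : ℕ → List ℕ → ℕ
  | _, [] => 0
  | lo, x :: w => if lo ≤ x then max (lisFrom lo w) (lisFrom x w + 1) else lisFrom lo w

theorem exists_sublist_length_eq_lisFrom (lo : ℕ) (w : List ℕ) :
    ∃ s : List ℕ, s.Sublist w ∧ (lo :: s).Pairwise (· ≤ ·) ∧ s.length = lisFrom lo w := by
  induction w generalizing lo with
  | nil => exact ⟨[], by simp [lisFrom]⟩
  | cons x w ih =>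
    obtain ⟨s, hsw, hs, hlen⟩ := ih lo
    obtain ⟨t, htw, ht, hlen'⟩ := ih x
    simp only [lisFrom]
    split_ifs with hx
    · rcases le_total (lisFrom lo w) (lisFrom x w + 1) with h | h
      · exact ⟨x :: t, htw.cons_cons x, ht.cons_cons_of_trans hx, by simp [hlen', h]⟩
      · exact ⟨s, hsw.cons x, hs, by simp [hlen, h]⟩
    · exact ⟨s, hsw.cons x, hs, hlen⟩

theorem length_le_lisFrom {lo : ℕ} {s w : List ℕ} (hsw : s.Sublist w)
    (hs : (lo :: s).Pairwise (· ≤ ·)) : s.length ≤ lisFrom lo w := by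
  induction hsw generalizing lo with
  | slnil => simp
  | cons x _ ih =>
    have := ih hs
    simp only [lisFrom]
    split_ifs <;> omega
  | cons_cons x _ ih =>
    have hx : lo ≤ x := List.rel_of_pairwise_cons hs (List.mem_cons_self ..)
    have := ih hs.of_cons
    simp only [lisFrom, if_pos hx, List.length_cons]
    omega

theorem lisFrom_antitone (w : List ℕ) : Antitone (lisFrom · w) := by
  intro lo lo' h
  induction w with
  | nil => rfl
  | cons x w ih =>
    simp only [lisFrom] at ih ⊢
    split_ifs <;> omega

theorem lisFrom_le_cons (lo x : ℕ) (w : List ℕ) : lisFrom lo w ≤ lisFrom lo (x :: w) := by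
  simp only [lisFrom]
  split_ifs <;> omega

theorem lisFrom_add_one_le_cons {lo x : ℕ} (h : lo ≤ x) (w : List ℕ) :
    lisFrom x w + 1 ≤ lisFrom lo (x :: w) := by
  simp only [lisFrom, if_pos h]
  omega

theorem lisFrom_le_length (lo : ℕ) (w : List ℕ) : lisFrom lo w ≤ w.length := by
  obtain ⟨s, hsw, -, hlen⟩ := exists_sublist_length_eq_lisFrom lo w
  exact hlen ▸ hsw.length_le

theorem lisFrom_append_congr {v w : List ℕ} (h : ∀ lo, lisFrom lo v = lisFrom lo w) (p : List ℕ)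
    (lo : ℕ) : lisFrom lo (p ++ v) = lisFrom lo (p ++ w) := by
  induction p generalizing lo with
  | nil => exact h lo
  | cons x p ih => simp only [List.cons_append, lisFrom, ih]

theorem KStep.lisFrom_eq {v w : List ℕ} (h : KStep v w) (lo : ℕ) : lisFrom lo v = lisFrom lo w := by
  cases h with
  | k1 p q a b c hab hbc =>
    rw [List.append_assoc, List.append_assoc]
    refine lisFrom_append_congr (fun lo => ?_) p lo
    have hanti : lisFrom c q ≤ lisFrom b q := lisFrom_antitone q hbc.le
    simp only [List.cons_append, List.nil_append, lisFrom]
    split_ifs <;> omega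
  | k2 p q a b c hab hbc =>
    rw [List.append_assoc, List.append_assoc]
    refine lisFrom_append_congr (fun lo => ?_) p lo
    have hab_anti : lisFrom b q ≤ lisFrom a q := lisFrom_antitone q hab.le
    have hbc_anti : lisFrom c q ≤ lisFrom b q := lisFrom_antitone q hbc
    simp only [List.cons_append, List.nil_append, lisFrom]
    split_ifs <;> omega

theorem KEquiv.lisFrom_eq {v w : List ℕ} (h : KEquiv v w) (lo : ℕ) :
    lisFrom lo v = lisFrom lo w := by
  induction h with
  | rel _ _ h => exact h.lisFrom_eq lo
  | refl _ => rfl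
  | symm _ _ _ ih => exact ih.symm
  | trans _ _ _ _ _ ih ih' => exact ih.trans ih'

theorem count_add_lisFrom_le_append {lo u : ℕ} (h : lo ≤ u) (v w : List ℕ) :
    v.count u + lisFrom u w ≤ lisFrom lo (v ++ w) := by
  induction v generalizing lo with
  | nil => simpa using lisFrom_antitone w h
  | cons x v ih =>
    rw [List.cons_append]
    by_cases hx : x = u
    · subst hx
      have := lisFrom_add_one_le_cons h (v ++ w)
      have := ih le_rfl
      rw [List.count_cons_self]
      omega
    · rw [List.count_cons_of_ne hx]
      exact (ih h).trans (lisFrom_le_cons lo x _)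

theorem lisFrom_replicate_append_le (lo u n : ℕ) (w : List ℕ) :
    lisFrom lo (List.replicate n u ++ w) ≤ max (lisFrom lo w) (n + lisFrom u w) := by
  induction n generalizing lo with
  | zero => simp
  | succ n ih =>
    have := ih lo
    have := ih u
    simp only [List.replicate_succ, List.cons_append, lisFrom]
    split_ifs <;> omega

theorem lisFrom_append_of_forall_lt {lo : ℕ} {w : List ℕ} (h : ∀ x ∈ w, x < lo) (v : List ℕ) :
    lisFrom lo (v ++ w) = lisFrom lo v := by
  have hw : ∀ lo' ≥ lo, lisFrom lo' w = 0 := by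
    intro lo' hlo
    induction w with
    | nil => rfl
    | cons x w ih =>
      rw [List.forall_mem_cons] at h
      rw [lisFrom, if_neg (by omega), ih h.2]
  induction v generalizing lo with
  | nil => exact hw lo le_rfl
  | cons x v ih =>
    simp only [List.cons_append, lisFrom, ih h hw]
    split_ifs with hx
    · rw [ih (fun y hy => (h y hy).trans_le hx) fun lo' hlo => hw lo' (hx.trans hlo)]
    · rfl

theorem lisFrom_append_replicate_le (u n : ℕ) (w : List ℕ) :
    lisFrom u (w ++ List.replicate n u) ≤ max w.length (w.count u + n) := by
  induction w with
  | nil => simpa using lisFrom_le_length u (List.replicate n u)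
  | cons x w ih =>
    rw [List.cons_append, lisFrom]
    rcases lt_trichotomy u x with hx | rfl | hx
    · have htail : lisFrom x (w ++ List.replicate n u) = lisFrom x w :=
        lisFrom_append_of_forall_lt (fun y hy => List.eq_of_mem_replicate hy ▸ hx) w
      have := lisFrom_le_length x w
      rw [if_pos hx.le, htail, List.length_cons, List.count_cons_of_ne hx.ne']
      omega
    · rw [if_pos le_rfl, List.length_cons, List.count_cons_self]
      omega
    · rw [if_neg hx.not_ge, List.length_cons, List.count_cons_of_ne hx.ne]
      omega

-- A subsequence using both blocks of `u`s is constant; one that misses a block is short.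
theorem lisFrom_replicate_append_replicate_le (u : ℕ) {n : ℕ} {w : List ℕ} (h : w.length ≤ n) :
    lisFrom 0 (List.replicate n u ++ (w ++ List.replicate n u)) ≤ w.count u + 2 * n := by
  have hprefix := lisFrom_replicate_append_le 0 u n (w ++ List.replicate n u)
  have hlength : lisFrom 0 (w ++ List.replicate n u) ≤ w.length + n := by
    simpa using lisFrom_le_length 0 (w ++ List.replicate n u)
  have hsuffix := lisFrom_append_replicate_le u n w
  omega

-- Follow a longest increasing subsequence of `v` in the first copy while its entries are at most
-- `u`, then take every `u` up to the same position of the second copy, and resume there.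
theorem lisFrom_add_count_le_append_append {lo u : ℕ} (h : lo ≤ u) (n : ℕ) (p v : List ℕ) :
    lisFrom lo v + (p ++ v).count u + n ≤ lisFrom lo (v ++ List.replicate n u ++ (p ++ v)) := by
  induction v generalizing lo p with
  | nil =>
    have := count_add_lisFrom_le_append h (List.replicate n u ++ p) []
    simp only [List.append_nil, List.nil_append, List.count_append, List.count_replicate_self,
      lisFrom] at this ⊢
    omega
  | cons x v ih =>
    have hih := fun lo' hlo => @ih lo' hlo (p ++ [x])
    simp only [List.append_assoc, List.cons_append, List.nil_append] at hih ⊢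
    set rest := v ++ (List.replicate n u ++ (p ++ x :: v)) with hrest
    have hskip := (hih lo h).trans (lisFrom_le_cons lo x rest)
    rw [lisFrom]
    split_ifs with hlo
    · rcases le_total x u with hx | hx
      · have htake := (Nat.add_le_add_right (hih x hx) 1).trans (lisFrom_add_one_le_cons hlo rest)
        omega
      · have hjump := count_add_lisFrom_le_append h (x :: v ++ List.replicate n u ++ p) (x :: v)
        have htake := lisFrom_add_one_le_cons hx v
        simp only [hrest, List.append_assoc, List.cons_append, List.count_append, List.count_cons,
          List.count_replicate_self] at hskip hjump ⊢
        omega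
    · exact hskip

/-! ### Columns -/

theorem kEquiv_cons_append_cons {x y : ℕ} {C S : List ℕ} (hxy : x ≤ y)
    (hC : (C ++ y :: S).Pairwise (· > ·)) :
    KEquiv (x :: (C ++ y :: S)) (C ++ x :: y :: S) := by
  induction C with
  | nil => rfl
  | cons c C ih =>
    rw [List.cons_append, List.pairwise_cons] at hC
    refine KEquiv.trans ?_ ((ih hC.2).append_left [c])
    rcases C with - | ⟨d, C⟩
    · exact .cons_swap_of_le_of_lt hxy (hC.1 y (by simp)) S
    · have hyd : y < d := List.rel_of_pairwise_cons hC.2 (by simp)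
      exact .cons_swap_of_le_of_lt (hxy.trans hyd.le) (hC.1 d (by simp)) (C ++ y :: S)

theorem kEquiv_cons_cons_append {x y : ℕ} {S : List ℕ} (hxy : x ≤ y)
    (hS : (x :: S).Pairwise (· > ·)) : KEquiv (x :: y :: S) (x :: S ++ [y]) := by
  induction S generalizing x with
  | nil => rfl
  | cons s S ih =>
    have hs : s < x := List.rel_of_pairwise_cons hS (by simp)
    exact (KEquiv.cons_swap_of_lt_of_le hs hxy S).symm.trans
      ((ih (hs.le.trans hxy) hS.of_cons).append_left [x])

theorem kEquiv_column_bump {x y : ℕ} {C S : List ℕ} (hxy : x ≤ y)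
    (hC : (C ++ y :: S).Pairwise (· > ·)) (hS : ∀ s ∈ S, s < x) :
    KEquiv (x :: (C ++ y :: S)) (C ++ x :: S ++ [y]) := by
  have hxS : (x :: S).Pairwise (· > ·) :=
    List.pairwise_cons.2 ⟨hS, (List.pairwise_append.1 hC).2.1.of_cons⟩
  have h := (kEquiv_cons_cons_append hxy hxS).append_left C
  rw [← List.append_assoc] at h
  exact (kEquiv_cons_append_cons hxy hC).trans h

theorem mem_cent_of_mem_column {u : ℕ} {C : List ℕ} (hC : C.Pairwise (· > ·)) (hu : u ∈ C) :
    C ∈ Cent [u] := by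
  obtain ⟨D, S, rfl⟩ := List.append_of_mem hu
  exact kEquiv_column_bump le_rfl hC
    fun s hs => List.rel_of_pairwise_cons (List.pairwise_append.1 hC).2.1 hs

/-- A list of columns (strictly decreasing words) with a weakly increasing choice of one entry from
each, starting at or above the first argument. The choice certifies that no fewer columns can
suffice. -/
inductive IsColumnForm : ℕ → List (List ℕ) → Prop
  | nil (lo : ℕ) : IsColumnForm lo []
  | cons {lo a : ℕ} {C : List ℕ} {Cs : List (List ℕ)} (hC : C.Pairwise (· > ·)) (ha : a ∈ C)
    (hlo : lo ≤ a) (hCs : IsColumnForm a Cs) : IsColumnForm lo (C :: Cs)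

namespace IsColumnForm

variable {lo : ℕ} {Cs : List (List ℕ)}

theorem anti {lo' : ℕ} (h : IsColumnForm lo Cs) (hlo : lo' ≤ lo) : IsColumnForm lo' Cs := by
  cases h with
  | nil => exact nil lo'
  | cons hC ha hle hCs => exact cons hC ha (hlo.trans hle) hCs

theorem pairwise (h : IsColumnForm lo Cs) : ∀ C ∈ Cs, C.Pairwise (· > ·) := by
  induction h with
  | nil => simp
  | cons hC _ _ _ ih => exact List.forall_mem_cons.2 ⟨hC, ih⟩

theorem length_le_lisFrom_flatten (h : IsColumnForm lo Cs) :
    Cs.length ≤ lisFrom lo Cs.flatten := by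
  induction h with
  | nil => simp
  | @cons lo a C Cs _ ha hlo _ ih =>
    have hcount : 1 ≤ C.count a := List.one_le_count_iff.2 ha
    have := count_add_lisFrom_le_append hlo C Cs.flatten
    rw [List.length_cons, List.flatten_cons]
    omega

end IsColumnForm

theorem forall_lt_or_exists_append_cons {α : Type*} [LinearOrder α] (x : α) {C : List α}
    (hC : C.Pairwise (· > ·)) :
    (∀ c ∈ C, c < x) ∨ ∃ D y S, C = D ++ y :: S ∧ x ≤ y ∧ ∀ s ∈ S, s < x := by
  induction C with
  | nil => simp
  | cons c C ih =>
    rcases ih hC.of_cons with h | ⟨D, y, S, rfl, hxy, hS⟩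
    · rcases lt_or_ge c x with hc | hc
      · exact .inl (List.forall_mem_cons.2 ⟨hc, h⟩)
      · exact .inr ⟨[], c, C, rfl, hc, h⟩
    · exact .inr ⟨c :: D, y, S, rfl, hxy, hS⟩

theorem pairwise_gt_append_cons_of_le {α : Type*} [Preorder α] {x y : α} {D S : List α}
    (hxy : x ≤ y) (h : (D ++ y :: S).Pairwise (· > ·)) (hS : ∀ s ∈ S, s < x) :
    (D ++ x :: S).Pairwise (· > ·) := by
  rw [List.pairwise_append, List.pairwise_cons] at h ⊢
  refine ⟨h.1, ⟨hS, h.2.1.2⟩, fun d hd => List.forall_mem_cons.2 ⟨?_, fun s hs => ?_⟩⟩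
  · exact hxy.trans_lt (h.2.2 d hd y (by simp))
  · exact h.2.2 d hd s (by simp [hs])

theorem IsColumnForm.exists_kEquiv_cons {lo : ℕ} {Cs : List (List ℕ)} (h : IsColumnForm lo Cs)
    (x : ℕ) : ∃ Cs', IsColumnForm (min lo x) Cs' ∧ KEquiv (x :: Cs.flatten) Cs'.flatten := by
  induction h generalizing x with
  | nil lo => exact ⟨[[x]], cons (by simp) (by simp) (min_le_right lo x) (nil x), .refl _⟩
  | @cons lo a C Cs hC ha hlo hCs ih =>
    rcases forall_lt_or_exists_append_cons x hC with hlt | ⟨D, y, S, rfl, hxy, hS⟩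
    · exact ⟨(x :: C) :: Cs, cons (hC.cons hlt) (by simp [ha]) (min_le_of_left_le hlo) hCs, .refl _⟩
    · obtain ⟨Cs', hCs', hequiv⟩ := ih y
      have hform : IsColumnForm (min lo x) ((D ++ x :: S) :: Cs') := by
        have hC' := pairwise_gt_append_cons_of_le hxy hC hS
        rcases le_or_gt x a with hxa | hax
        · exact cons hC' (by simp) (min_le_right lo x) (hCs'.anti (le_min hxa hxy))
        · have ha' : a ∈ D ++ x :: S := by
            simp only [List.mem_append, List.mem_cons] at ha ⊢
            exact ha.imp_right fun h => h.imp (fun h => by omega) id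
          exact cons hC' ha' (min_le_of_left_le hlo) (hCs'.anti (le_min le_rfl (hax.le.trans hxy)))
      have hbump : KEquiv (x :: (D ++ y :: S) ++ Cs.flatten) (D ++ x :: S ++ y :: Cs.flatten) := by
        simpa using (kEquiv_column_bump hxy hC hS).append_right Cs.flatten
      exact ⟨(D ++ x :: S) :: Cs', hform, hbump.trans (hequiv.append_left _)⟩

theorem exists_isColumnForm_kEquiv (w : List ℕ) :
    ∃ Cs, IsColumnForm 0 Cs ∧ KEquiv w Cs.flatten := by
  induction w with
  | nil => exact ⟨[], .nil 0, .refl _⟩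
  | cons x w ih =>
    obtain ⟨Cs, hCs, hequiv⟩ := ih
    obtain ⟨Cs', hCs', hequiv'⟩ := hCs.exists_kEquiv_cons x
    exact ⟨Cs', hCs'.anti (Nat.zero_le _), (hequiv.append_left [x]).trans hequiv'⟩

/-! ### The centralizer of a letter -/

theorem count_flatten_le_length {α : Type*} [DecidableEq α] {ws : List (List α)} (u : α)
    (h : ∀ w ∈ ws, w.Nodup) : ws.flatten.count u ≤ ws.length := by
  rw [List.count_flatten]
  simpa using List.sum_le_card_nsmul (ws.map (List.count u)) 1
    (by simpa using fun w hw => List.nodup_iff_count_le_one.1 (h w hw) u)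

theorem forall_mem_of_length_le_count_flatten {α : Type*} [DecidableEq α] {u : α}
    {ws : List (List α)} (h : ∀ w ∈ ws, w.Nodup) (hcount : ws.length ≤ ws.flatten.count u) :
    ∀ w ∈ ws, u ∈ w := by
  induction ws with
  | nil => simp
  | cons w ws ih =>
    rw [List.forall_mem_cons] at h ⊢
    have hw := List.nodup_iff_count_le_one.1 h.1 u
    have hws := count_flatten_le_length u h.2
    rw [List.length_cons, List.flatten_cons, List.count_append] at hcount
    exact ⟨List.count_pos_iff.1 (by omega), ih h.2 (by omega)⟩

theorem lisFrom_le_count_of_mem_cent {u : ℕ} {w : List ℕ} (h : w ∈ Cent [u]) :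
    lisFrom 0 w ≤ w.count u := by
  set n := (w ++ w).length with hn
  set U := List.replicate n u with hU
  have hcomm : KEquiv (U ++ w) (w ++ U) := mem_cent_replicate h n
  have hequiv : KEquiv (U ++ (w ++ w ++ U)) (w ++ (U ++ U) ++ w) := by
    simpa only [List.append_assoc] using hcomm.append hcomm.symm
  have hupper := lisFrom_replicate_append_replicate_le u (w := w ++ w) hn.ge
  have hlower := lisFrom_add_count_le_append_append (Nat.zero_le u) (n + n) [] w
  rw [← List.replicate_append_replicate, List.nil_append, ← hU, ← hequiv.lisFrom_eq] at hlower
  rw [List.count_append, ← hU] at hupper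
  omega

theorem mem_cent_of_lisFrom_le_count {u : ℕ} {w : List ℕ} (h : lisFrom 0 w ≤ w.count u) :
    w ∈ Cent [u] := by
  obtain ⟨Cs, hCs, hequiv⟩ := exists_isColumnForm_kEquiv w
  have hcount : Cs.length ≤ Cs.flatten.count u :=
    calc Cs.length ≤ lisFrom 0 Cs.flatten := hCs.length_le_lisFrom_flatten
      _ = lisFrom 0 w := (hequiv.lisFrom_eq 0).symm
      _ ≤ w.count u := h
      _ = Cs.flatten.count u := hequiv.perm.count_eq u
  have hnodup : ∀ C ∈ Cs, C.Nodup := fun C hC => (hCs.pairwise C hC).imp fun h => h.ne'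
  have hmem := forall_mem_of_length_le_count_flatten hnodup hcount
  exact mem_cent_of_kEquiv hequiv.symm
    (flatten_mem_cent fun C hC => mem_cent_of_mem_column (hCs.pairwise C hC) (hmem C hC))

theorem mem_cent_singleton_iff {u : ℕ} {w : List ℕ} : w ∈ Cent [u] ↔ lisFrom 0 w ≤ w.count u :=
  ⟨lisFrom_le_count_of_mem_cent, mem_cent_of_lisFrom_le_count⟩

theorem eq_nil_of_mem_cent_of_notMem {u : ℕ} {w : List ℕ} (h : w ∈ Cent [u]) (hu : u ∉ w) :
    w = [] := by
  rw [mem_cent_singleton_iff, List.count_eq_zero_of_not_mem hu] at h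
  cases w with
  | nil => rfl
  | cons x w => exact absurd ((lisFrom_add_one_le_cons (Nat.zero_le x) w).trans h) (by omega)

/-! ### Raising unmatched letters -/

/-- The crystal operator `i ↦ i + 1` applied as often as possible: each letter `i` is matched like a
closing parenthesis with an earlier open `i + 1`, and the unmatched letters `i` become `i + 1`. The
second argument is the number of letters `i + 1` already open. -/
def raise (i : ℕ) : ℕ → List ℕ → List ℕ
  | _, [] => []
  | d, x :: w =>
    if x = i + 1 then x :: raise i (d + 1) w
    else if x = i then (if d = 0 then i + 1 else i) :: raise i (d - 1) w
    else x :: raise i d w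

/-- The number of letters `i + 1` left open after the scan of `raise i d w`. -/
def depth (i : ℕ) : ℕ → List ℕ → ℕ
  | d, [] => d
  | d, x :: w =>
    if x = i + 1 then depth i (d + 1) w
    else if x = i then depth i (d - 1) w
    else depth i d w

theorem length_raise (i d : ℕ) (w : List ℕ) : (raise i d w).length = w.length := by
  induction w generalizing d with
  | nil => rfl
  | cons x w ih =>
    simp only [raise]
    split_ifs <;> simp only [List.length_cons, ih]

theorem mem_or_eq_succ_of_mem_raise {i d x : ℕ} {w : List ℕ} (h : x ∈ raise i d w) :
    x ∈ w ∨ x = i + 1 := by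
  induction w generalizing d with
  | nil => simp [raise] at h
  | cons y w ih =>
    simp only [raise] at h
    grind

theorem count_succ_raise (i d : ℕ) (w : List ℕ) :
    (raise i d w).count (i + 1) + d = w.count i + depth i d w := by
  induction w generalizing d with
  | nil => simp [raise, depth]
  | cons x w ih =>
    have := ih d
    have := ih (d + 1)
    have := ih (d - 1)
    simp only [raise, depth]
    split_ifs <;> simp only [List.count_cons, beq_iff_eq] <;> split_ifs <;> omega

-- The scan is reversible: each output letter and the depth after it determine the input letter
-- and the depth before it.
theorem eq_of_raise_eq_of_depth_eq {i d e : ℕ} {v w : List ℕ} (h : raise i d v = raise i e w)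
    (hdepth : depth i d v = depth i e w) : v = w ∧ d = e := by
  induction v generalizing d e w with
  | nil =>
    have hlen := congrArg List.length h
    rw [length_raise, length_raise] at hlen
    obtain rfl := List.length_eq_zero_iff.1 hlen.symm
    exact ⟨rfl, hdepth⟩
  | cons x v ih =>
    cases w with
    | nil => simpa [length_raise] using congrArg List.length h
    | cons y w =>
      simp only [raise, depth] at h hdepth
      split_ifs at h hdepth <;> obtain ⟨hhead, htail⟩ := List.cons_eq_cons.1 h <;>
        obtain ⟨rfl, hde⟩ := ih htail hdepth <;>
        exact ⟨congrArg (List.cons · v) (show x = y by omega), by omega⟩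

theorem lisFrom_raise_of_succ_lt {i lo : ℕ} (h : i + 1 < lo) (d : ℕ) (w : List ℕ) :
    lisFrom lo (raise i d w) = lisFrom lo w := by
  induction w generalizing d lo with
  | nil => rfl
  | cons x w ih =>
    simp only [raise]
    grind [lisFrom]

-- Up to a raised letter, the image has `d` fewer letters `i + 1` than the word has letters `i`, so
-- the part of a subsequence up to that letter can be traded for these letters `i`.
theorem lisFrom_succ_raise_le (i d : ℕ) (w : List ℕ) :
    lisFrom (i + 1) (raise i d w) ≤ max (lisFrom (i + 1) w) (lisFrom i w - d) := by
  induction w generalizing d with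
  | nil => simp [raise, lisFrom]
  | cons x w ih =>
    have hsame := ih d
    have hopen := ih (d + 1)
    have hclose := ih (d - 1)
    have hanti : lisFrom (i + 1) w ≤ lisFrom i w := lisFrom_antitone w i.le_succ
    simp only [raise]
    grind [lisFrom, lisFrom_raise_of_succ_lt]

theorem lisFrom_raise_le {i lo : ℕ} (h : lo ≤ i) (d : ℕ) (w : List ℕ) :
    lisFrom lo (raise i d w) ≤ lisFrom lo w := by
  induction w generalizing d lo with
  | nil => rfl
  | cons x w ih =>
    have hopen := lisFrom_succ_raise_le i (d + 1) w
    have hclose := lisFrom_succ_raise_le i (d - 1) w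
    have hanti : lisFrom (i + 1) w ≤ lisFrom i w := lisFrom_antitone w i.le_succ
    have hanti' : lisFrom i w ≤ lisFrom lo w := lisFrom_antitone w h
    simp only [raise]
    grind [lisFrom, lisFrom_raise_of_succ_lt]

-- The left-hand side counts the letters `i` up to the last unmatched one and the letters `i + 1`
-- after it; if all are matched, it counts the letters `i + 1` and the initial `d`.
theorem count_add_depth_le (i d : ℕ) (w : List ℕ) :
    w.count i + depth i d w ≤ max (lisFrom i w) (lisFrom (i + 1) w + d) := by
  induction w generalizing d with
  | nil => simp [depth]
  | cons x w ih =>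
    have hsame := ih d
    have hopen := ih (d + 1)
    have hclose := ih (d - 1)
    have hanti : lisFrom (i + 1) w ≤ lisFrom i w := lisFrom_antitone w i.le_succ
    simp only [depth]
    grind [lisFrom]

theorem depth_eq_zero_of_mem_cent {i : ℕ} {w : List ℕ} (h : w ∈ Cent [i]) : depth i 0 w = 0 := by
  rw [mem_cent_singleton_iff] at h
  have hzero : lisFrom i w ≤ lisFrom 0 w := lisFrom_antitone w (Nat.zero_le i)
  have hsucc : lisFrom (i + 1) w ≤ lisFrom i w := lisFrom_antitone w i.le_succ
  have := count_add_depth_le i 0 w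
  omega

theorem raise_mem_cent {i : ℕ} {w : List ℕ} (h : w ∈ Cent [i]) : raise i 0 w ∈ Cent [i + 1] := by
  rw [mem_cent_singleton_iff]
  calc lisFrom 0 (raise i 0 w) ≤ lisFrom 0 w := lisFrom_raise_le (Nat.zero_le i) 0 w
    _ ≤ w.count i := mem_cent_singleton_iff.1 h
    _ = (raise i 0 w).count (i + 1) := by
      simpa [depth_eq_zero_of_mem_cent h] using (count_succ_raise i 0 w).symm

theorem raise_injOn_cent (i : ℕ) : Set.InjOn (raise i 0) (Cent [i]) := fun _ hv _ hw h =>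
  (eq_of_raise_eq_of_depth_eq h
    ((depth_eq_zero_of_mem_cent hv).trans (depth_eq_zero_of_mem_cent hw).symm)).1

/-! ### Reverse complements -/

theorem lisFrom_zero_reverse_map_le {f : ℕ → ℕ} {w : List ℕ} (hf : StrictAntiOn f {x | x ∈ w}) :
    lisFrom 0 (w.map f).reverse ≤ lisFrom 0 w := by
  obtain ⟨s, hsw, hs, hlen⟩ := exists_sublist_length_eq_lisFrom 0 (w.map f).reverse
  obtain ⟨t, htw, ht⟩ := List.sublist_map_iff.1 (List.reverse_sublist.1 (s.reverse_reverse ▸ hsw))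
  have hft : t.Pairwise fun x y => f y ≤ f x := by
    have hrev := List.pairwise_reverse.2 hs.of_cons
    rwa [ht, List.pairwise_map] at hrev
  have hmono : t.Pairwise (· ≤ ·) :=
    hft.imp_of_mem fun hx hy h => (hf.le_iff_ge (htw.subset hy) (htw.subset hx)).1 h
  calc lisFrom 0 (w.map f).reverse = t.length := by
        rw [← hlen, ← List.length_reverse, ht, List.length_map]
    _ ≤ lisFrom 0 w := length_le_lisFrom htw (List.pairwise_cons.2 ⟨by simp, hmono⟩)

theorem reverse_map_mem_cent {f : ℕ → ℕ} {u : ℕ} {w : List ℕ} (hf : StrictAntiOn f {x | x ∈ w})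
    (h : w ∈ Cent [u]) : (w.map f).reverse ∈ Cent [f u] := by
  rw [mem_cent_singleton_iff]
  calc lisFrom 0 (w.map f).reverse ≤ lisFrom 0 w := lisFrom_zero_reverse_map_le hf
    _ ≤ w.count u := mem_cent_singleton_iff.1 h
    _ ≤ (w.map f).count (f u) := List.count_le_count_map
    _ = (w.map f).reverse.count (f u) := List.count_reverse.symm

theorem injOn_list_map {α β : Type*} {f : α → β} {s : Set α} (hf : Set.InjOn f s) :
    Set.InjOn (List.map f) {w | ∀ x ∈ w, x ∈ s} := by
  intro v hv w hw h
  induction v generalizing w with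
  | nil => exact (List.map_eq_nil_iff.1 h.symm).symm
  | cons x v ih =>
    cases w with
    | nil => simp at h
    | cons y w =>
      obtain ⟨hx, hv⟩ := List.forall_mem_cons.1 hv
      obtain ⟨hy, hw⟩ := List.forall_mem_cons.1 hw
      obtain ⟨hxy, hvw⟩ := List.cons_eq_cons.1 h
      rw [hf hx hy hxy, ih hv hw hvw]

/-! ### Counting the centralizer of a letter -/

theorem finite_setOf_length_eq_and_forall_mem {α : Type*} {s : Set α} (hs : s.Finite) (n : ℕ) :
    {w : List α | w.length = n ∧ ∀ x ∈ w, x ∈ s}.Finite := by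
  have := hs.to_subtype
  refine ((List.finite_length_eq s n).image (List.map Subtype.val)).subset ?_
  rintro w ⟨hlen, hw⟩
  lift w to List s using hw
  exact ⟨w, by simpa using hlen, rfl⟩

theorem finite_setOf_mem_cent (u : List ℕ) (n m : ℕ) :
    {w : List ℕ | w ∈ Cent u ∧ w.length = n ∧ ∀ x ∈ w, 1 ≤ x ∧ x ≤ m}.Finite :=
  (finite_setOf_length_eq_and_forall_mem (Set.finite_Icc 1 m) n).subset fun _ hw => hw.2

theorem c_le_c_of_injOn {n m : ℕ} {u v : List ℕ} (f : List ℕ → List ℕ)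
    (hinj : Set.InjOn f {w | w ∈ Cent u ∧ ∀ x ∈ w, 1 ≤ x ∧ x ≤ m})
    (hf : ∀ w ∈ Cent u, (∀ x ∈ w, 1 ≤ x ∧ x ≤ m) →
      f w ∈ Cent v ∧ (f w).length = w.length ∧ ∀ x ∈ f w, 1 ≤ x ∧ x ≤ m) :
    c n m u ≤ c n m v := by
  refine Set.ncard_le_ncard_of_injOn f ?_ (hinj.mono ?_) (finite_setOf_mem_cent v n m)
  · rintro w ⟨hw, rfl, hx⟩
    exact hf w hw hx
  · exact fun w hw => ⟨hw.1, hw.2.2⟩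

theorem c_singleton_le_succ {i m : ℕ} (n : ℕ) (hi : i + 1 ≤ m) : c n m [i] ≤ c n m [i + 1] := by
  refine c_le_c_of_injOn (raise i 0) ((raise_injOn_cent i).mono fun w hw => And.left hw)
    fun w hw hx => ⟨raise_mem_cent hw, length_raise i 0 w, fun x hxr => ?_⟩
  rcases mem_or_eq_succ_of_mem_raise hxr with hxw | rfl
  · exact hx x hxw
  · exact ⟨i.succ_pos, hi⟩

theorem c_singleton_mono {i j m : ℕ} (n : ℕ) (hij : i ≤ j) (hj : j ≤ m) :
    c n m [i] ≤ c n m [j] := by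
  induction j, hij using Nat.le_induction with
  | base => rfl
  | succ j _ ih => exact (ih (j.le_succ.trans hj)).trans (c_singleton_le_succ n hj)

theorem c_singleton_le_complement (n m u : ℕ) : c n m [u] ≤ c n m [m + 1 - u] := by
  have hanti : StrictAntiOn (m + 1 - ·) (Set.Icc 1 m) := fun x _ y hy hxy => by
    have := hy.2
    dsimp only
    omega
  refine c_le_c_of_injOn (fun w => (w.map (m + 1 - ·)).reverse)
    (List.reverse_injective.comp_injOn
      ((injOn_list_map hanti.injOn).mono fun w hw => hw.2))
    fun w hw hx => ⟨reverse_map_mem_cent (hanti.mono hx) hw, by simp, fun y hy => ?_⟩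
  obtain ⟨x, hxw, rfl⟩ := List.mem_map.1 (List.mem_reverse.1 hy)
  have := hx x hxw
  omega

theorem c_singleton_of_lt {n m u : ℕ} (hu : m < u) : c n m [u] = if n = 0 then 1 else 0 := by
  have hnil : {w : List ℕ | w ∈ Cent [u] ∧ w.length = n ∧ ∀ x ∈ w, 1 ≤ x ∧ x ≤ m} =
      {w | w = [] ∧ n = 0} := by
    ext w
    constructor
    · rintro ⟨hw, rfl, hx⟩
      have := eq_nil_of_mem_cent_of_notMem hw fun hmem => ((hx u hmem).2.trans_lt hu).false
      exact ⟨this, by simp [this]⟩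
    · rintro ⟨rfl, rfl⟩
      exact ⟨KEquiv.refl [u], rfl, by simp⟩
  rw [c, hnil]
  split_ifs with hn <;> simp [hn]

end Plactic

open Plactic in
theorem stmt_14 (u n m : ℕ) (hu : 0 < u) :
    (u ≤ m → c n m [u] = c n m [1]) ∧
    (m < u → c n m [u] = if n = 0 then 1 else 0) :=
  ⟨fun hum => le_antisymm
      ((c_singleton_mono n hum le_rfl).trans (by simpa using c_singleton_le_complement n m m))
      (c_singleton_mono n hu hum),
    c_singleton_of_lt⟩
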